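/- arXiv:2004.12005 — 2 statements merged into one kernel-verified Lean document; each statement's English description precedes it below -/
import Mathlib

section
/- Let M ≤ N be integers, γ a measure on ℤ with mass function q positive on a contiguous support containing ⟦M,N⟧, h : ⟦M,N⟧ → ℝ an arbitrary function, and Φ a convex real-valued function on the set 𝒫ₕᵞ(⟦M,N⟧) of probability distributions supported on ⟦M,N⟧ that are log-concave with respect to γ and satisfy E[h(X)] ≥ 0. Then the supremum of Φ over 𝒫ₕᵞ(⟦M,N⟧) is at most the supremum of Φ over the subset of distributions in 𝒫ₕᵞ(⟦M,N⟧) whose p.m.f. with respect to γ has the log-affine form f(n) = C·pⁿ·1_{⟦k,l⟧}(n) for some C, p > 0 and integers M ≤ k ≤ l ≤ N. -/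
/-- The support of `f : ℤ → ℝ` is contiguous. -/
def ContigSupportInt (f : ℤ → ℝ) : Prop :=
  ∀ a b c : ℤ, a ≤ b → b ≤ c → 0 < f a → 0 < f c → 0 < f b

/-- A p.m.f. `p` is log-concave with respect to the reference mass function `q`. -/
def IsLogConcaveWrt (q p : ℤ → ℝ) : Prop :=
  (∀ n : ℤ, (p (n - 1) / q (n - 1)) * (p (n + 1) / q (n + 1)) ≤ (p n / q n) ^ 2) ∧
    ContigSupportInt (fun n => p n / q n)

/-- `𝒫ₕᵞ(⟦M,N⟧)`: probability mass functions supported on `⟦M,N⟧`, log-concave with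
respect to `q`, with `E[h(X)] ≥ 0`. -/
def LCPmfSet (q : ℤ → ℝ) (M N : ℤ) (h : ℤ → ℝ) : Set (ℤ → ℝ) :=
  { p | (∀ n, 0 ≤ p n) ∧ (∀ n : ℤ, n ∉ Finset.Icc M N → p n = 0) ∧
      (∑ n ∈ Finset.Icc M N, p n) = 1 ∧ IsLogConcaveWrt q p ∧
      0 ≤ ∑ n ∈ Finset.Icc M N, h n * p n }

/-- The members of `𝒫ₕᵞ(⟦M,N⟧)` whose p.m.f. with respect to `γ` is of the truncated
log-affine form `C·ρⁿ·1_{⟦k,l⟧}(n)`. -/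
def LAPmfSet (q : ℤ → ℝ) (M N : ℤ) (h : ℤ → ℝ) : Set (ℤ → ℝ) :=
  LCPmfSet q M N h ∩
    { p | ∃ C : ℝ, 0 < C ∧ ∃ ρ : ℝ, 0 < ρ ∧ ∃ k l : ℤ, M ≤ k ∧ k ≤ l ∧ l ≤ N ∧
      ∀ n : ℤ, p n / q n = if k ≤ n ∧ n ≤ l then C * ρ ^ n else 0 }

/-!
The set `𝒫ₕᵞ(⟦M,N⟧)` is compact and finite-dimensional, so its convex hull is compact and, by
Krein–Milman, is the closed convex hull of its extreme points, all of which lie in `𝒫ₕᵞ(⟦M,N⟧)`.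
Suppose such an extreme point `p` were strictly log-concave with respect to `q` at an interior
point `n₀` of its support. Multiply it by `1 ± t * g` with `g` affine on each side of `n₀`: positive
affine factors preserve log-concavity off `n₀`, and for small `t` the slack at `n₀` takes care of
the kink. The admissible `g` form a three-dimensional space, while preserving total mass and
`E[h(X)]` imposes only two linear conditions, so some nonzero `g` contradicts extremality. Hence the
extreme points are log-affine on their support. That is a closed condition, so the convex hull of
the log-affine elements is already closed; every element of `𝒫ₕᵞ(⟦M,N⟧)` is therefore a finite
convex combination of log-affine ones, and no continuity of `Φ` is needed.
-/

open Filter Finset Topology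

section ConvexHull

theorem finiteDimensional_vectorSpan_of_eq_zero_off {𝕜 ι : Type*} [DivisionRing 𝕜]
    {S : Set (ι → 𝕜)} (s : Finset ι) (hS : ∀ p ∈ S, ∀ n ∉ s, p n = 0) :
    FiniteDimensional 𝕜 (vectorSpan 𝕜 S) := by
  classical
  let W : Submodule 𝕜 (ι → 𝕜) := Submodule.span 𝕜 ((fun n => Pi.single n 1) '' s)
  have : FiniteDimensional 𝕜 W := .span_of_finite 𝕜 (s.finite_toSet.image _)
  have hSW (p : ι → 𝕜) (hp : p ∈ S) : p ∈ W := by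
    have hsum : p = ∑ n ∈ s, p n • Pi.single n 1 := by
      ext m
      by_cases hm : m ∈ s <;> simp [Finset.sum_apply, Pi.single_apply, hm, hS p hp m]
    rw [hsum]
    exact W.sum_mem fun n hn => W.smul_mem _ (Submodule.subset_span ⟨n, hn, rfl⟩)
  refine Submodule.finiteDimensional_of_le (S₂ := W) (Submodule.span_le.2 ?_)
  rintro _ ⟨p, hp, r, hr, rfl⟩
  exact W.sub_mem (hSW p hp) (hSW r hr)

theorem convexHull_eq_iUnion_image_stdSimplex {𝕜 E : Type*} [Field 𝕜] [LinearOrder 𝕜]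
    [IsStrictOrderedRing 𝕜] [AddCommGroup E] [Module 𝕜 E] (s : Set E)
    [FiniteDimensional 𝕜 (vectorSpan 𝕜 s)] :
    convexHull 𝕜 s = ⋃ d ∈ Set.Iic (Module.finrank 𝕜 (vectorSpan 𝕜 s) + 1),
      (fun x : (Fin d → 𝕜) × (Fin d → E) => ∑ i, x.1 i • x.2 i) ''
        (stdSimplex 𝕜 (Fin d) ×ˢ Set.univ.pi fun _ => s) := by
  refine Set.Subset.antisymm (fun x hx => ?_) (Set.iUnion₂_subset fun d _ => ?_)
  · obtain ⟨ι, _, z, w, hz, hind, hw, hw1, rfl⟩ := eq_pos_convex_span_of_mem_convexHull hx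
    have hcard : Fintype.card ι ≤ Module.finrank 𝕜 (vectorSpan 𝕜 s) + 1 :=
      hind.card_le_finrank_succ.trans
        (Nat.add_le_add_right (Submodule.finrank_mono (vectorSpan_mono 𝕜 hz)) 1)
    let e := (Fintype.equivFin ι).symm
    exact Set.mem_biUnion hcard ⟨(w ∘ e, z ∘ e),
      ⟨⟨fun i => (hw (e i)).le, (e.sum_comp w).trans hw1⟩, fun i _ => hz ⟨e i, rfl⟩⟩,
      e.sum_comp fun i => w i • z i⟩
  · rintro _ ⟨⟨w, z⟩, ⟨⟨hw, hw1⟩, hz⟩, rfl⟩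
    exact mem_convexHull_of_exists_fintype w z hw hw1 (fun i => hz i trivial) rfl

variable {E : Type*} [AddCommGroup E] [Module ℝ E]

theorem eq_zero_of_mem_extremePoints_of_eventually_add_smul_mem {s : Set E} {x v : E}
    (hx : x ∈ s.extremePoints ℝ) (hv : ∀ᶠ t : ℝ in 𝓝 0, x + t • v ∈ s) : v = 0 := by
  have hneg : ∀ᶠ t : ℝ in 𝓝 0, x + (-t) • v ∈ s :=
    (continuous_neg.tendsto' (0 : ℝ) 0 neg_zero).eventually hv
  obtain ⟨t, ⟨hpos, hneg⟩, ht⟩ :=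
    (((hv.and hneg).filter_mono nhdsWithin_le_nhds).and self_mem_nhdsWithin).exists (f := 𝓝[≠] 0)
  have hmid : x ∈ openSegment ℝ (x + t • v) (x + (-t) • v) :=
    ⟨1 / 2, 1 / 2, by norm_num, by norm_num, by norm_num, by module⟩
  exact (smul_eq_zero.1 (add_eq_left.1 (hx.2 hpos hneg hmid))).resolve_left ht

variable [TopologicalSpace E] [IsTopologicalAddGroup E] [ContinuousSMul ℝ E]

theorem isCompact_convexHull_of_finiteDimensional {s : Set E}
    [FiniteDimensional ℝ (vectorSpan ℝ s)] (hs : IsCompact s) : IsCompact (convexHull ℝ s) := by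
  rw [convexHull_eq_iUnion_image_stdSimplex]
  refine (Set.finite_Iic _).isCompact_biUnion fun d _ => IsCompact.image ?_ (by fun_prop)
  exact (isCompact_stdSimplex ℝ (Fin d)).prod (isCompact_univ_pi fun _ => hs)

theorem convexHull_subset_convexHull_inter_of_extremePoints_subset [T2Space E]
    [LocallyConvexSpace ℝ E] {s t : Set E} [FiniteDimensional ℝ (vectorSpan ℝ s)]
    (hs : IsCompact s) (ht : IsClosed t) (hst : (convexHull ℝ s).extremePoints ℝ ⊆ t) :
    convexHull ℝ s ⊆ convexHull ℝ (s ∩ t) := by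
  have : FiniteDimensional ℝ (vectorSpan ℝ (s ∩ t)) :=
    Submodule.finiteDimensional_of_le (vectorSpan_mono ℝ Set.inter_subset_left)
  have hclosed : IsClosed (convexHull ℝ (s ∩ t)) :=
    (isCompact_convexHull_of_finiteDimensional (hs.inter_right ht)).isClosed
  rw [← closure_convexHull_extremePoints (isCompact_convexHull_of_finiteDimensional hs)
    (convex_convexHull ℝ s)]
  exact closure_minimal
    (convexHull_mono (Set.subset_inter extremePoints_convexHull_subset hst)) hclosed

end ConvexHull

section UpperBounds

theorem upperBounds_image_eq_of_subset_convexHull {𝕜 E β : Type*} [Semiring 𝕜] [PartialOrder 𝕜]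
    [AddCommMonoid E] [Module 𝕜 E] [Preorder β] {s t : Set E} {f : E → β}
    (hf : QuasiconvexOn 𝕜 (convexHull 𝕜 s) f) (hts : t ⊆ s) (hst : s ⊆ convexHull 𝕜 t) :
    upperBounds (f '' s) = upperBounds (f '' t) := by
  refine (upperBounds_mono_set (Set.image_mono hts)).antisymm fun b hb => ?_
  rintro _ ⟨x, hx, rfl⟩
  have hsub : t ⊆ {y ∈ convexHull 𝕜 s | f y ≤ b} := fun y hy =>
    ⟨subset_convexHull 𝕜 s (hts hy), hb ⟨y, hy, rfl⟩⟩
  exact (convexHull_min hsub (hf b) (hst hx)).2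

theorem csSup_eq_csSup_of_upperBounds_eq {β : Type*} [ConditionallyCompleteLinearOrder β]
    [NoBotOrder β] {s t : Set β} (h : upperBounds s = upperBounds t) : sSup s = sSup t := by
  have hempty (u : Set β) : u = ∅ ↔ upperBounds u = Set.univ :=
    ⟨fun hu => hu ▸ upperBounds_empty, fun hu => Set.eq_empty_of_forall_notMem fun x hx =>
      not_isBot x fun y => (hu ▸ Set.mem_univ y : y ∈ upperBounds u) hx⟩
  rcases s.eq_empty_or_nonempty with hs | hs
  · rw [hs, (hempty t).2 (h ▸ (hempty s).1 hs)]
  have ht : t.Nonempty := Set.nonempty_iff_ne_empty.2 fun ht =>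
    hs.ne_empty ((hempty s).2 (h.trans ((hempty t).1 ht)))
  by_cases hb : BddAbove s
  · exact ((isLUB_congr h).1 (isLUB_csSup hs hb)).csSup_eq ht |>.symm
  · have hb' : ¬BddAbove t := fun ⟨x, hx⟩ => hb ⟨x, h ▸ hx⟩
    rw [csSup_of_not_bddAbove hb, csSup_of_not_bddAbove hb']

end UpperBounds

section Sequences

variable {f : ℤ → ℝ}

theorem mul_le_mul_add_one_sub_one_of_logConcave (hf : ∀ n, 0 ≤ f n)
    (hlc : ∀ n, f (n - 1) * f (n + 1) ≤ f n ^ 2) (hc : ContigSupportInt f) {a c : ℤ}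
    (hac : a < c) : f a * f c ≤ f (a + 1) * f (c - 1) := by
  rcases (hf a).eq_or_lt with ha | ha
  · rw [← ha, zero_mul]; exact mul_nonneg (hf _) (hf _)
  induction c, (hac : a + 1 ≤ c) using Int.leInduction with
  | base => rw [add_sub_cancel_right, mul_comm]
  | succ m hm ih =>
    rcases (hf (m + 1)).eq_or_lt with hm1 | hm1
    · rw [← hm1, mul_zero]; exact mul_nonneg (hf _) (hf _)
    have hpos : 0 < f (m - 1) := hc a (m - 1) (m + 1) (by lia) (by lia) ha hm1
    rw [add_sub_cancel_right]
    refine le_of_mul_le_mul_right ?_ hpos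
    calc f a * f (m + 1) * f (m - 1) = f a * (f (m - 1) * f (m + 1)) := by ring
      _ ≤ f a * f m ^ 2 := mul_le_mul_of_nonneg_left (hlc m) ha.le
      _ = f a * f m * f m := by ring
      _ ≤ f (a + 1) * f (m - 1) * f m := mul_le_mul_of_nonneg_right ih (hf m)
      _ = f (a + 1) * f m * f (m - 1) := by ring

theorem contigSupportInt_of_mul_le_mul_add_one_sub_one (hf : ∀ n, 0 ≤ f n)
    (h : ∀ a c, a < c → f a * f c ≤ f (a + 1) * f (c - 1)) : ContigSupportInt f := by
  intro a b c hab hbc ha hc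
  induction b, hab using Int.leInduction with
  | base => exact ha
  | succ m _ ih =>
    have hprod : 0 < f (m + 1) * f (c - 1) :=
      (mul_pos (ih (by lia)) hc).trans_le (h m c (by lia))
    exact pos_of_mul_pos_left hprod (hf _)

theorem isLogConcaveWrt_iff_forall_mul_le {q p : ℤ → ℝ} (hpq : ∀ n, 0 ≤ p n / q n) :
    IsLogConcaveWrt q p ↔ ∀ a c : ℤ, a < c →
      p a / q a * (p c / q c) ≤ p (a + 1) / q (a + 1) * (p (c - 1) / q (c - 1)) := by
  refine ⟨fun h a c hac => mul_le_mul_add_one_sub_one_of_logConcave hpq h.1 h.2 hac, fun h =>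
    ⟨fun n => ?_, contigSupportInt_of_mul_le_mul_add_one_sub_one hpq h⟩⟩
  simpa only [sub_add_cancel, add_sub_cancel_right, ← sq] using h (n - 1) (n + 1) (by lia)

theorem exists_pos_iff_le_and_le_of_contigSupportInt {M N : ℤ} (hc : ContigSupportInt f)
    (hMN : ∀ n, 0 < f n → n ∈ Icc M N) (hpos : ∃ n, 0 < f n) :
    ∃ k l, M ≤ k ∧ k ≤ l ∧ l ≤ N ∧ ∀ n, 0 < f n ↔ k ≤ n ∧ n ≤ l := by
  let s : Set ℤ := {n | 0 < f n}
  have hbelow : BddBelow s := ⟨M, fun n hn => (mem_Icc.1 (hMN n hn)).1⟩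
  have habove : BddAbove s := ⟨N, fun n hn => (mem_Icc.1 (hMN n hn)).2⟩
  have hk : sInf s ∈ s := Int.csInf_mem hpos hbelow
  have hl : sSup s ∈ s := Int.csSup_mem hpos habove
  exact ⟨sInf s, sSup s, (mem_Icc.1 (hMN _ hk)).1, csInf_le hbelow hl, (mem_Icc.1 (hMN _ hl)).2,
    fun n => ⟨fun hn => ⟨csInf_le hbelow hn, le_csSup habove hn⟩, fun hn =>
      hc _ n _ hn.1 hn.2 hk hl⟩⟩

/-- `f` has equality in the log-concavity inequality at the interior points of its support. It is
written as a polynomial identity because that is visibly a closed condition on `f`. -/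
def IsLocallyLogAffine (f : ℤ → ℝ) : Prop :=
  ∀ n, f (n - 1) * f (n + 1) * (f n ^ 2 - f (n - 1) * f (n + 1)) = 0

theorem IsLocallyLogAffine.exists_eq_mul_zpow (hf : IsLocallyLogAffine f) {k l : ℤ}
    (hkl : k ≤ l) (hpos : ∀ n, k ≤ n → n ≤ l → 0 < f n) :
    ∃ C : ℝ, 0 < C ∧ ∃ ρ : ℝ, 0 < ρ ∧ ∀ n, k ≤ n → n ≤ l → f n = C * ρ ^ n := by
  have hk : 0 < f k := hpos k le_rfl hkl
  rcases hkl.eq_or_lt with rfl | hlt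
  · exact ⟨f k, hk, 1, one_pos, fun n hkn hnk => by rw [hnk.antisymm hkn, one_zpow, mul_one]⟩
  let ρ := f (k + 1) / f k
  have hρ : 0 < ρ := div_pos (hpos _ (by lia) hlt) hk
  have hratio (n : ℤ) (hn : k ≤ n) : n < l → f (n + 1) = ρ * f n := by
    induction n, hn using Int.leInduction with
    | base => exact fun _ => (div_mul_cancel₀ _ hk.ne').symm
    | succ m hm ih =>
      intro hml
      have hm0 := hpos m hm (by lia)
      have hm2 := hpos (m + 1 + 1) (by lia) hml
      have heq := hf (m + 1)
      rw [add_sub_cancel_right] at heq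
      have hsq := (mul_eq_zero.1 heq).resolve_left (mul_pos hm0 hm2).ne'
      apply mul_left_cancel₀ hm0.ne'
      linear_combination f (m + 1) * ih (by lia) - hsq
  refine ⟨f k / ρ ^ k, by positivity, ρ, hρ, fun n hn => ?_⟩
  induction n, hn using Int.leInduction with
  | base => exact fun _ => (div_mul_cancel₀ _ (zpow_pos hρ k).ne').symm
  | succ m hm ih =>
    intro hml
    rw [hratio m hm hml, ih (by lia), zpow_add_one₀ hρ.ne']
    ring

end Sequences

section Perturbation

/-- The functions on `ℤ` that are affine on each side of `n₀`, parametrized by their value at `n₀`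
and their outward slopes to the left and to the right of `n₀`. They are the multiplicative
perturbations of a mass function that stay affine away from `n₀`. -/
noncomputable def hinge (n₀ : ℤ) : (Fin 3 → ℝ) →ₗ[ℝ] ℤ → ℝ :=
  Fintype.linearCombination ℝ ![1, fun n => ((max (n₀ - n) 0 : ℤ) : ℝ),
    fun n => ((max (n - n₀) 0 : ℤ) : ℝ)]

theorem hinge_apply (n₀ : ℤ) (v : Fin 3 → ℝ) (n : ℤ) :
    hinge n₀ v n =
      v 0 + v 1 * ((max (n₀ - n) 0 : ℤ) : ℝ) + v 2 * ((max (n - n₀) 0 : ℤ) : ℝ) := by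
  simp [hinge, Fintype.linearCombination_apply, Fin.sum_univ_three]

theorem hinge_sub_one_add_hinge_add_one {n₀ n : ℤ} (v : Fin 3 → ℝ) (hn : n ≠ n₀) :
    hinge n₀ v (n - 1) + hinge n₀ v (n + 1) = 2 * hinge n₀ v n := by
  have hleft : ((max (n₀ - (n - 1)) 0 : ℤ) : ℝ) + (max (n₀ - (n + 1)) 0 : ℤ)
      = 2 * (max (n₀ - n) 0 : ℤ) := by
    exact_mod_cast (by lia : max (n₀ - (n - 1)) 0 + max (n₀ - (n + 1)) 0 = 2 * max (n₀ - n) 0)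
  have hright : ((max (n - 1 - n₀) 0 : ℤ) : ℝ) + (max (n + 1 - n₀) 0 : ℤ)
      = 2 * (max (n - n₀) 0 : ℤ) := by
    exact_mod_cast (by lia : max (n - 1 - n₀) 0 + max (n + 1 - n₀) 0 = 2 * max (n - n₀) 0)
  simp only [hinge_apply]
  linear_combination v 1 * hleft + v 2 * hright

theorem eq_zero_of_hinge_eq_zero {n₀ : ℤ} {v : Fin 3 → ℝ} (hleft : hinge n₀ v (n₀ - 1) = 0)
    (hmid : hinge n₀ v n₀ = 0) (hright : hinge n₀ v (n₀ + 1) = 0) : v = 0 := by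
  have h0 : v 0 = 0 := by simpa [hinge_apply] using hmid
  have h1 : v 1 = 0 := by simpa [hinge_apply, h0] using hleft
  have h2 : v 2 = 0 := by simpa [hinge_apply, h0] using hright
  ext i
  fin_cases i
  exacts [h0, h1, h2]

theorem exists_ne_zero_sum_mul_hinge_eq_zero (n₀ : ℤ) (s : Finset ℤ) (u w : ℤ → ℝ) :
    ∃ v ≠ 0, ∑ n ∈ s, u n * hinge n₀ v n = 0 ∧ ∑ n ∈ s, w n * hinge n₀ v n = 0 := by
  let pairing (u : ℤ → ℝ) : (ℤ → ℝ) →ₗ[ℝ] ℝ := ∑ n ∈ s, u n • LinearMap.proj n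
  have hker : (((pairing u).prod (pairing w)).comp (hinge n₀)).ker ≠ ⊥ :=
    LinearMap.ker_ne_bot_of_finrank_lt (by simp)
  obtain ⟨v, hv, hv0⟩ := (Submodule.ne_bot_iff _).1 hker
  refine ⟨v, hv0, ?_⟩
  simpa [pairing, LinearMap.sum_apply] using hv

theorem ContigSupportInt.mul {f w : ℤ → ℝ} (hf : ContigSupportInt f)
    (hw : ∀ n, f n ≠ 0 → 0 < w n) : ContigSupportInt fun n => f n * w n := by
  have hiff (n : ℤ) : 0 < f n * w n ↔ 0 < f n := by
    by_cases hn : f n = 0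
    · simp only [hn, zero_mul]
    · exact mul_pos_iff_of_pos_right (hw n hn)
  intro a b c hab hbc ha hc
  exact (hiff b).2 (hf a b c hab hbc ((hiff a).1 ha) ((hiff c).1 hc))

theorem eventually_forall_pos_one_add_mul {ι : Type*} {s : Set ι} (hs : s.Finite)
    (g : ι → ℝ) : ∀ᶠ t : ℝ in 𝓝 0, ∀ n ∈ s, 0 < 1 + t * g n := by
  refine (eventually_all_finite hs).2 fun n _ => ?_
  have hcont : ContinuousAt (fun t : ℝ => 1 + t * g n) 0 := by fun_prop
  exact hcont.eventually_const_lt (by simp)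

theorem eventually_isLogConcaveWrt_mul_one_add_smul {q p g : ℤ → ℝ} {n₀ : ℤ}
    (hp : IsLogConcaveWrt q p) (hfin : p.support.Finite)
    (hg : ∀ n, n ≠ n₀ → g (n - 1) + g (n + 1) = 2 * g n)
    (hstrict : p (n₀ - 1) / q (n₀ - 1) * (p (n₀ + 1) / q (n₀ + 1)) < (p n₀ / q n₀) ^ 2) :
    ∀ᶠ t : ℝ in 𝓝 0, IsLogConcaveWrt q (p * (1 + t • g)) := by
  have hfactor (t : ℝ) (n : ℤ) : (p * (1 + t • g)) n / q n = p n / q n * (1 + t * g n) :=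
    mul_div_right_comm _ _ _
  have hslack : ∀ᶠ t : ℝ in 𝓝 0,
      p (n₀ - 1) / q (n₀ - 1) * (1 + t * g (n₀ - 1)) *
        (p (n₀ + 1) / q (n₀ + 1) * (1 + t * g (n₀ + 1))) <
      (p n₀ / q n₀ * (1 + t * g n₀)) ^ 2 :=
    ContinuousAt.eventually_lt (by fun_prop) (by fun_prop) (by simpa using hstrict)
  filter_upwards [hslack, eventually_forall_pos_one_add_mul hfin g] with t hslack hpos
  have hpos' (n : ℤ) (hn : p n / q n ≠ 0) : 0 < 1 + t * g n := hpos n (div_ne_zero_iff.1 hn).1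
  simp only [IsLogConcaveWrt, hfactor]
  refine ⟨fun n => ?_, hp.2.mul hpos'⟩
  by_cases hn : n = n₀
  · exact hn ▸ hslack.le
  by_cases hzero : p (n - 1) / q (n - 1) * (p (n + 1) / q (n + 1)) = 0
  · rw [mul_mul_mul_comm, hzero, zero_mul]; exact sq_nonneg _
  have hamgm : (1 + t * g (n - 1)) * (1 + t * g (n + 1)) ≤ (1 + t * g n) ^ 2 := by
    have hmid : 2 * (1 + t * g n) = (1 + t * g (n - 1)) + (1 + t * g (n + 1)) := by
      linear_combination -t * hg n hn
    linarith [four_mul_le_sq_add (1 + t * g (n - 1)) (1 + t * g (n + 1)),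
      congrArg (· ^ 2) hmid]
  rw [mul_mul_mul_comm, mul_pow]
  exact mul_le_mul (hp.1 n) hamgm (mul_pos (hpos' _ (left_ne_zero_of_mul hzero))
    (hpos' _ (right_ne_zero_of_mul hzero))).le (sq_nonneg _)

end Perturbation

section LogConcavePmf

variable {q p h : ℤ → ℝ} {M N : ℤ}

theorem div_nonneg_of_eq_zero_off_Icc (hq : ∀ n ∈ Icc M N, 0 ≤ q n) (hp : ∀ n, 0 ≤ p n)
    (hp0 : ∀ n ∉ Icc M N, p n = 0) (n : ℤ) : 0 ≤ p n / q n := by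
  by_cases hn : n ∈ Icc M N
  · exact div_nonneg (hp n) (hq n hn)
  · rw [hp0 n hn, zero_div]

theorem finite_support_of_mem_lcPmfSet (hp : p ∈ LCPmfSet q M N h) : p.support.Finite :=
  (Icc M N).finite_toSet.subset fun n hn => by_contra fun hn' => hn (hp.2.1 n hn')

theorem isClosed_lcPmfSet (hq : ∀ n ∈ Icc M N, 0 ≤ q n) (h : ℤ → ℝ) :
    IsClosed (LCPmfSet q M N h) := by
  have heq : LCPmfSet q M N h = {p | (∀ n, 0 ≤ p n) ∧ (∀ n : ℤ, n ∉ Icc M N → p n = 0) ∧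
      ∑ n ∈ Icc M N, p n = 1 ∧
      (∀ a c : ℤ, a < c →
        p a / q a * (p c / q c) ≤ p (a + 1) / q (a + 1) * (p (c - 1) / q (c - 1))) ∧
      0 ≤ ∑ n ∈ Icc M N, h n * p n} := by
    ext p
    refine and_congr_right fun hp => and_congr_right fun hp0 => and_congr_right fun _ =>
      and_congr_left fun _ => ?_
    exact isLogConcaveWrt_iff_forall_mul_le (div_nonneg_of_eq_zero_off_Icc hq hp hp0)
  simp only [heq, Set.ofPred_and, Set.ofPred_forall]
  refine .inter ?_ (.inter ?_ (.inter ?_ (.inter ?_ ?_)))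
  · exact isClosed_iInter fun n => isClosed_le (by fun_prop) (by fun_prop)
  · exact isClosed_iInter fun n => isClosed_iInter fun _ => isClosed_eq (by fun_prop) (by fun_prop)
  · exact isClosed_eq (by fun_prop) (by fun_prop)
  · exact isClosed_iInter fun a => isClosed_iInter fun c => isClosed_iInter fun _ =>
      isClosed_le (by fun_prop) (by fun_prop)
  · exact isClosed_le (by fun_prop) (by fun_prop)

theorem isCompact_lcPmfSet (hq : ∀ n ∈ Icc M N, 0 ≤ q n) (h : ℤ → ℝ) :
    IsCompact (LCPmfSet q M N h) := by
  have hcube : IsCompact (Set.univ.pi fun _ : ℤ => Set.Icc (0 : ℝ) 1) :=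
    isCompact_univ_pi fun _ => isCompact_Icc
  refine hcube.of_isClosed_subset (isClosed_lcPmfSet hq h) ?_
  rintro p ⟨hp, hp0, hsum, -, -⟩ n -
  refine ⟨hp n, ?_⟩
  by_cases hn : n ∈ Icc M N
  · exact hsum ▸ single_le_sum (fun i _ => hp i) hn
  · exact hp0 n hn ▸ zero_le_one

theorem isClosed_setOf_isLocallyLogAffine_div (q : ℤ → ℝ) :
    IsClosed {p : ℤ → ℝ | IsLocallyLogAffine fun n => p n / q n} := by
  simp only [IsLocallyLogAffine, Set.ofPred_forall]
  exact isClosed_iInter fun n => isClosed_eq (by fun_prop) (by fun_prop)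

theorem mem_laPmfSet_of_isLocallyLogAffine (hq : ∀ n ∈ Icc M N, 0 < q n)
    (hp : p ∈ LCPmfSet q M N h) (hla : IsLocallyLogAffine fun n => p n / q n) :
    p ∈ LAPmfSet q M N h := by
  have ⟨hp0, hpout, hsum, ⟨_, hc⟩, _⟩ := hp
  have hnonneg := div_nonneg_of_eq_zero_off_Icc (fun n hn => (hq n hn).le) hp0 hpout
  have hmem (n : ℤ) (hn : 0 < p n / q n) : n ∈ Icc M N := by
    by_contra hn'
    exact hn.ne' (by rw [hpout n hn', zero_div])
  have hpos : ∃ n, 0 < p n / q n := by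
    obtain ⟨n, hn, hpn⟩ := exists_ne_zero_of_sum_ne_zero (hsum ▸ one_ne_zero)
    exact ⟨n, div_pos ((hp0 n).lt_of_ne' hpn) (hq n hn)⟩
  obtain ⟨k, l, hMk, hkl, hlN, hiff⟩ := exists_pos_iff_le_and_le_of_contigSupportInt hc hmem hpos
  obtain ⟨C, hC, ρ, hρ, hform⟩ :=
    hla.exists_eq_mul_zpow hkl fun n hkn hnl => (hiff n).2 ⟨hkn, hnl⟩
  refine ⟨hp, C, hC, ρ, hρ, k, l, hMk, hkl, hlN, fun n => ?_⟩
  split_ifs with hn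
  · exact hform n hn.1 hn.2
  · exact le_antisymm (not_lt.1 (mt (hiff n).1 hn)) (hnonneg n)

theorem eventually_mul_one_add_smul_mem_lcPmfSet {g : ℤ → ℝ} {n₀ : ℤ} (hp : p ∈ LCPmfSet q M N h)
    (hg : ∀ n, n ≠ n₀ → g (n - 1) + g (n + 1) = 2 * g n)
    (hstrict : p (n₀ - 1) / q (n₀ - 1) * (p (n₀ + 1) / q (n₀ + 1)) < (p n₀ / q n₀) ^ 2)
    (hmass : ∑ n ∈ Icc M N, p n * g n = 0) (hmean : ∑ n ∈ Icc M N, h n * p n * g n = 0) :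
    ∀ᶠ t : ℝ in 𝓝 0, p * (1 + t • g) ∈ LCPmfSet q M N h := by
  have hfin := finite_support_of_mem_lcPmfSet hp
  obtain ⟨hp0, hpout, hsum, hlc, hexp⟩ := hp
  filter_upwards [eventually_isLogConcaveWrt_mul_one_add_smul hlc hfin hg hstrict,
    eventually_forall_pos_one_add_mul hfin g] with t hlct hpos
  refine ⟨fun n => ?_, fun n hn => by simp [hpout n hn], ?_, hlct, ?_⟩
  · by_cases hn : p n = 0
    · rw [Pi.mul_apply, hn, zero_mul]
    · exact mul_nonneg (hp0 n) (hpos n hn).le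
  · simp [mul_add, sum_add_distrib, mul_left_comm _ t, ← mul_sum, hsum, hmass]
  · calc 0 ≤ ∑ n ∈ Icc M N, h n * p n + t * ∑ n ∈ Icc M N, h n * p n * g n := by
          rwa [hmean, mul_zero, add_zero]
      _ = ∑ n ∈ Icc M N, h n * (p * (1 + t • g)) n := by
          rw [mul_sum, ← sum_add_distrib]
          refine sum_congr rfl fun n _ => ?_
          simp only [Pi.mul_apply, Pi.add_apply, Pi.one_apply, Pi.smul_apply, smul_eq_mul]
          ring

theorem isLocallyLogAffine_div_of_mem_extremePoints (hq : ∀ n ∈ Icc M N, 0 ≤ q n)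
    (hp : p ∈ (convexHull ℝ (LCPmfSet q M N h)).extremePoints ℝ) :
    IsLocallyLogAffine fun n => p n / q n := by
  have hpLC : p ∈ LCPmfSet q M N h := extremePoints_convexHull_subset hp
  intro n₀
  by_contra hne
  obtain ⟨hprod, hdiff⟩ := mul_ne_zero_iff.1 hne
  have hnonneg := div_nonneg_of_eq_zero_off_Icc hq hpLC.1 hpLC.2.1
  have hstrict : p (n₀ - 1) / q (n₀ - 1) * (p (n₀ + 1) / q (n₀ + 1)) < (p n₀ / q n₀) ^ 2 :=
    (hpLC.2.2.2.1.1 n₀).lt_of_ne' (sub_ne_zero.1 hdiff)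
  obtain ⟨hleft, hright⟩ := mul_ne_zero_iff.1 hprod
  have hmid : p n₀ / q n₀ ≠ 0 :=
    sq_pos_iff.1 ((mul_nonneg (hnonneg _) (hnonneg _)).trans_lt hstrict)
  obtain ⟨v, hv, hmass, hmean⟩ :=
    exists_ne_zero_sum_mul_hinge_eq_zero n₀ (Icc M N) p fun n => h n * p n
  have hperturb :
      ∀ᶠ t : ℝ in 𝓝 0, p + t • (p * hinge n₀ v) ∈ convexHull ℝ (LCPmfSet q M N h) := by
    filter_upwards [eventually_mul_one_add_smul_mem_lcPmfSet hpLC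
      (fun n => hinge_sub_one_add_hinge_add_one v) hstrict hmass hmean] with t ht
    rw [mul_add, mul_one, mul_smul_comm] at ht
    exact subset_convexHull ℝ _ ht
  have hmul : p * hinge n₀ v = 0 :=
    eq_zero_of_mem_extremePoints_of_eventually_add_smul_mem hp hperturb
  have hvanish (n : ℤ) (hn : p n / q n ≠ 0) : hinge n₀ v n = 0 :=
    (mul_eq_zero.1 (congrFun hmul n)).resolve_left (div_ne_zero_iff.1 hn).1
  exact hv (eq_zero_of_hinge_eq_zero (hvanish _ hleft) (hvanish _ hmid) (hvanish _ hright))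

theorem lcPmfSet_subset_convexHull_laPmfSet (hq : ∀ n ∈ Icc M N, 0 < q n) (h : ℤ → ℝ) :
    LCPmfSet q M N h ⊆ convexHull ℝ (LAPmfSet q M N h) := by
  have : FiniteDimensional ℝ (vectorSpan ℝ (LCPmfSet q M N h)) :=
    finiteDimensional_vectorSpan_of_eq_zero_off (Icc M N) fun p hp => hp.2.1
  have hq0 (n : ℤ) (hn : n ∈ Icc M N) : 0 ≤ q n := (hq n hn).le
  calc LCPmfSet q M N h ⊆ convexHull ℝ (LCPmfSet q M N h) := subset_convexHull ℝ _
    _ ⊆ convexHull ℝ (LCPmfSet q M N h ∩ {p | IsLocallyLogAffine fun n => p n / q n}) :=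
      convexHull_subset_convexHull_inter_of_extremePoints_subset (isCompact_lcPmfSet hq0 h)
        (isClosed_setOf_isLocallyLogAffine_div q)
        fun _ => isLocallyLogAffine_div_of_mem_extremePoints hq0
    _ ⊆ convexHull ℝ (LAPmfSet q M N h) :=
      convexHull_mono fun _ hp => mem_laPmfSet_of_isLocallyLogAffine hq hp.1 hp.2

end LogConcavePmf

/-- Stated with `upperBounds` because `sSup` takes a junk value on empty and on unbounded sets. -/
theorem sSup_convex_le_sSup_logAffine_general {β : Type*} [Preorder β] {M N : ℤ} {q h : ℤ → ℝ}
    (hq : ∀ n ∈ Icc M N, 0 < q n) {Φ : (ℤ → ℝ) → β}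
    (hΦ : QuasiconvexOn ℝ (convexHull ℝ (LCPmfSet q M N h)) Φ) :
    upperBounds (Φ '' LCPmfSet q M N h) = upperBounds (Φ '' LAPmfSet q M N h) :=
  upperBounds_image_eq_of_subset_convexHull hΦ Set.inter_subset_left
    (lcPmfSet_subset_convexHull_laPmfSet hq h)

/-- A convex function on `𝒫ₕᵞ(⟦M,N⟧)` is maximized over distributions whose p.m.f.
with respect to `γ` is log-affine on a segment. -/
theorem sSup_convex_le_sSup_logAffine (M N : ℤ) (hMN : M ≤ N)
    (q : ℤ → ℝ) (hq0 : ∀ n, 0 ≤ q n) (hqc : ContigSupportInt q)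
    (hqpos : ∀ n ∈ Finset.Icc M N, 0 < q n)
    (h : ℤ → ℝ) (Φ : (ℤ → ℝ) → ℝ)
    (hΦ : ConvexOn ℝ (convexHull ℝ (LCPmfSet q M N h)) Φ) :
    sSup (Φ '' LCPmfSet q M N h) ≤ sSup (Φ '' LAPmfSet q M N h) :=
  (csSup_eq_csSup_of_upperBounds_eq
    (sSup_convex_le_sSup_logAffine_general hqpos hΦ.quasiconvexOn)).le
end

section
/- (Dilation inequality) Let μ be a log-concave probability measure on ℤ, let K ⊆ ℤ be a (possibly infinite) interval, and let A ⊆ K. For δ ∈ (0,1), define A_δ = { z ∈ A : |A ∩ Δ_z| ≥ (1−δ)·|Δ_z| for every interval Δ ⊆ K containing z }, where Δ_z = Δ \ {z} and |·| denotes cardinality. Then μ(A) ≥ μ(A_δ)^δ · μ(K)^{1−δ}. -/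
/-- `p` is the p.m.f. of a log-concave probability measure on `ℤ`. -/
def IsLogConcavePMF (p : ℤ → ℝ) : Prop :=
  (∀ n, 0 ≤ p n) ∧ Summable p ∧ (∑' n : ℤ, p n) = 1 ∧
    (∀ n : ℤ, p (n - 1) * p (n + 1) ≤ p n ^ 2) ∧ ContigSupportInt p

/-- `S ⊆ ℤ` is an interval: `z₁ ≤ z₂ ≤ z₃` with `z₁, z₃ ∈ S` implies `z₂ ∈ S`. -/
def IsIntervalZ (S : Set ℤ) : Prop :=
  ∀ a b c : ℤ, a ≤ b → b ≤ c → a ∈ S → c ∈ S → b ∈ S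

/-- The measure of a set `S ⊆ ℤ` under the p.m.f. `p`. -/
noncomputable def measOf (p : ℤ → ℝ) (S : Set ℤ) : ℝ :=
  ∑' n : ℤ, S.indicator p n

/-- The `δ`-interior `A_δ` of `A` relative to the interval `K`:
points `z ∈ A` such that `|A ∩ Δ_z| ≥ (1−δ)·|Δ_z|` for every interval `Δ ⊆ K`
containing `z`, where `Δ_z = Δ \ {z}`. -/
def dilationInterior (K A : Set ℤ) (δ : ℝ) : Set ℤ :=
  { z ∈ A | ∀ Δ : Set ℤ, IsIntervalZ Δ → Δ.Finite → Δ ⊆ K → z ∈ Δ →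
      (1 - δ) * ((Δ \ {z}).ncard : ℝ) ≤ ((A ∩ (Δ \ {z})).ncard : ℝ) }

/-!
Among the log-concave sequences on a finite interval with the same total mass and the same mass of
`A_δ` as `p`, the mass of `A` is minimised at an extreme point `q`. If `q` were strictly log-concave
at some `c`, then the functions `w` that are affine on either side of `c` would form a
three-dimensional space, two linear constraints would leave one with `q * (1 ± t * w)` admissible
for small `t`, and `q` would not be extreme. Hence `q` is geometric on its support and, after a
reflection, decreasing there.

For a decreasing `q` on `[k, l]`, let `z` be the least point of `A_δ`. To the right of `z`, every
initial segment contains at most `δ` times as many points outside `A` as points outside `A_δ`, so by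
Abel summation the same holds for masses. To the left of `z` there are at most `δ * (z - k)` points
outside `A`, whose mass is at most that of the first points of `[k, l]`; since the tails
of a log-concave sequence are log-concave, that mass is at most
`q[k, l] - q[z, l] ^ δ * q[k, l] ^ (1 - δ)`. Weighted AM-GM combines the two bounds. An infinite `K`
is exhausted by windows.
-/

section DilationInequality

open Finset

theorem mul_sum_range_le_mul_sum_range_of_antitoneOn {d : ℕ → ℝ} {m N : ℕ}
    (hd : AntitoneOn d (Set.Iio N)) (hmN : m ≤ N) :
    (m : ℝ) * ∑ i ∈ range N, d i ≤ N * ∑ i ∈ range m, d i := by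
  have hmono : MonovaryOn d (fun i => if i < m then (1 : ℝ) else 0) (range N) := by
    intro i hi j hj hij
    simp only [coe_range, Set.mem_Iio] at hi hj
    have hji : j ≤ i := by
      by_contra! hlt
      dsimp only at hij
      split_ifs at hij <;> first | lia | norm_num at hij
    exact hd hj hi hji
  have hfilter : (range N).filter (· < m) = range m := by grind
  simpa [← sum_filter, hfilter, mul_comm] using hmono.sum_mul_sum_le_card_mul_sum

theorem rpow_mul_rpow_le_sub {b T S δ : ℝ} (hb : 0 ≤ b) (hbT : b ≤ T) (hTS : T ≤ S) (hδ0 : 0 ≤ δ)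
    (hδ1 : δ ≤ 1) : b ^ δ * S ^ (1 - δ) ≤ T ^ δ * S ^ (1 - δ) - δ * (T - b) := by
  have hT : 0 ≤ T := hb.trans hbT
  have hamgm : b ^ δ * T ^ (1 - δ) ≤ δ * b + (1 - δ) * T :=
    Real.geom_mean_le_arith_mean2_weighted hδ0 (sub_nonneg.2 hδ1) hb hT (by ring)
  have hsplit : T ^ δ * T ^ (1 - δ) = T := by
    rw [← Real.rpow_add_of_nonneg hT hδ0 (sub_nonneg.2 hδ1), add_sub_cancel, Real.rpow_one]
  have hTS' : T ^ (1 - δ) ≤ S ^ (1 - δ) := Real.rpow_le_rpow hT hTS (sub_nonneg.2 hδ1)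
  have hbT' : b ^ δ ≤ T ^ δ := Real.rpow_le_rpow hb hbT hδ0
  linear_combination hamgm + mul_nonneg (sub_nonneg.2 hTS') (sub_nonneg.2 hbT') - hsplit

theorem monotoneOn_or_antitoneOn_of_sq_eq {f : ℤ → ℝ} {k l : ℤ} (hpos : ∀ n ∈ Icc k l, 0 < f n)
    (hgeom : ∀ c ∈ Ioo k l, f c ^ 2 = f (c - 1) * f (c + 1)) :
    MonotoneOn f (Set.Icc k l) ∨ AntitoneOn f (Set.Icc k l) := by
  have hratio : ∀ n, k ≤ n → n + 1 ≤ l → f (n + 1) * f k = f n * f (k + 1) := by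
    intro n hkn hnl
    induction n, hkn using Int.leInduction with
    | base => ring
    | succ n hkn ih =>
      have hstep := hgeom (n + 1) (mem_Ioo.2 (by lia))
      rw [add_sub_cancel_right] at hstep
      refine mul_left_cancel₀ (hpos n (mem_Icc.2 (by lia))).ne' ?_
      linear_combination f (n + 1) * ih (by lia) - f k * hstep
  rcases le_total (f k) (f (k + 1)) with hle | hle
  · refine .inl (monotoneOn_of_le_add_one Set.ordConnected_Icc fun n _ hn hn' => ?_)
    refine le_of_mul_le_mul_right ?_ (hpos k (mem_Icc.2 ⟨le_rfl, hn.1.trans hn.2⟩))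
    rw [hratio n hn.1 hn'.2]
    exact mul_le_mul_of_nonneg_left hle (hpos n (mem_Icc.2 hn)).le
  · refine .inr (antitoneOn_of_add_one_le Set.ordConnected_Icc fun n _ hn hn' => ?_)
    refine le_of_mul_le_mul_right ?_ (hpos k (mem_Icc.2 ⟨le_rfl, hn.1.trans hn.2⟩))
    rw [hratio n hn.1 hn'.2]
    exact mul_le_mul_of_nonneg_left hle (hpos n (mem_Icc.2 hn)).le

theorem exists_mem_extremePoints_forall_le {E : Type*} [AddCommGroup E] [Module ℝ E]
    [TopologicalSpace E] [T2Space E] [IsTopologicalAddGroup E] [ContinuousSMul ℝ E]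
    [LocallyConvexSpace ℝ E] {S : Set E} (hS : IsCompact S) (hne : S.Nonempty) (g : E →L[ℝ] ℝ) :
    ∃ x ∈ S.extremePoints ℝ, ∀ y ∈ S, g x ≤ g y := by
  have hexp : IsExposed ℝ S ((-g).toExposed S) := ContinuousLinearMap.toExposed.isExposed
  obtain ⟨m, hmS, hm⟩ := hS.exists_isMinOn hne g.continuous.continuousOn
  have hface : ((-g).toExposed S).Nonempty :=
    ⟨m, hmS, fun y hy => neg_le_neg (isMinOn_iff.1 hm y hy)⟩
  obtain ⟨x, hx⟩ := (hexp.isCompact hS).extremePoints_nonempty hface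
  exact ⟨x, hexp.isExtreme.extremePoints_subset_extremePoints hx,
    fun y hy => neg_le_neg_iff.1 (hx.1.2 y hy)⟩

section Summation

variable {k l : ℤ}

theorem sum_mul_nonneg_of_sum_Icc_nonneg {f w : ℤ → ℝ}
    (hf : ∀ y ∈ Icc k l, 0 ≤ ∑ n ∈ Icc k y, f n) (hw : AntitoneOn w (Set.Icc k l))
    (hw0 : ∀ n ∈ Icc k l, 0 ≤ w n) : 0 ≤ ∑ n ∈ Icc k l, f n * w n := by
  rcases lt_or_ge l k with hlk | hkl
  · simp [Icc_eq_empty hlk.not_ge]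
  suffices habel : ∀ y, k ≤ y → y ≤ l →
      (∑ n ∈ Icc k y, f n) * w y ≤ ∑ n ∈ Icc k y, f n * w n from
    (mul_nonneg (hf l (right_mem_Icc.2 hkl)) (hw0 l (right_mem_Icc.2 hkl))).trans
      (habel l hkl le_rfl)
  intro y hky hyl
  induction y, hky using Int.leInduction with
  | base => simp
  | succ y hky ih =>
    have hle : w (y + 1) ≤ w y := hw ⟨hky, by lia⟩ ⟨by lia, hyl⟩ (by lia)
    have hdecr := mul_le_mul_of_nonneg_left hle (hf y (mem_Icc.2 ⟨hky, by lia⟩))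
    rw [← insert_Icc_right_eq_Icc_add_one (by lia), sum_insert (by simp), sum_insert (by simp)]
    linarith [ih (by lia)]

theorem sum_le_mul_sum_of_card_le {C D : Finset ℤ} {w : ℤ → ℝ} {c : ℝ} (hC : C ⊆ Icc k l)
    (hD : D ⊆ Icc k l)
    (hCD : ∀ y ∈ Icc k l, (#(C ∩ Icc k y) : ℝ) ≤ c * #(D ∩ Icc k y))
    (hw : AntitoneOn w (Set.Icc k l)) (hw0 : ∀ n ∈ Icc k l, 0 ≤ w n) :
    ∑ n ∈ C, w n ≤ c * ∑ n ∈ D, w n := by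
  have habel := sum_mul_nonneg_of_sum_Icc_nonneg
    (f := fun n => c * (if n ∈ D then 1 else 0) - if n ∈ C then 1 else 0)
    (fun y hy => by
      have := hCD y hy
      simp only [sum_sub_distrib, ← mul_sum, sum_boole, filter_mem_eq_inter]
      rw [inter_comm _ D, inter_comm _ C]
      linarith) hw hw0
  simp only [sub_mul, mul_assoc, ite_mul, one_mul, zero_mul, sum_sub_distrib, ← mul_sum,
    sum_ite_mem, inter_eq_right.2 hC, inter_eq_right.2 hD] at habel
  linarith

theorem sum_le_sum_Ico_card {C : Finset ℤ} {w : ℤ → ℝ} (hC : C ⊆ Icc k l)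
    (hw : AntitoneOn w (Set.Icc k l)) (hw0 : ∀ n ∈ Icc k l, 0 ≤ w n) :
    ∑ n ∈ C, w n ≤ ∑ n ∈ Ico k (k + #C), w n := by
  have hCl := card_le_card hC
  rw [Int.card_Icc] at hCl
  refine (sum_le_mul_sum_of_card_le hC (fun n hn => ?_) (fun y _ => ?_) hw hw0).trans_eq
    (one_mul _)
  · rw [mem_Ico] at hn
    exact mem_Icc.2 (by lia)
  · have hprefix : Ico k (k + #C) ∩ Icc k y = Ico k (min (k + #C) (y + 1)) := by grind
    have hle := card_le_card (inter_subset_left : C ∩ Icc k y ⊆ C)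
    have hle' := card_le_card (inter_subset_right : C ∩ Icc k y ⊆ Icc k y)
    rw [Int.card_Icc] at hle'
    rw [one_mul, hprefix, Int.card_Ico]
    exact_mod_cast (by lia)

end Summation

/-- Log-concave sequences on `ℤ`. The cross inequality with `a ≤ b` arbitrary encodes both
`f (n - 1) * f (n + 1) ≤ f n ^ 2` and the contiguity of the support, and, unlike the latter, it is
preserved by pointwise limits. -/
structure IsLogConcaveSeq (f : ℤ → ℝ) : Prop where
  nonneg : ∀ n, 0 ≤ f n
  mul_add_one_le : ∀ a b, a ≤ b → f a * f (b + 1) ≤ f (a + 1) * f b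

namespace IsLogConcaveSeq

variable {f : ℤ → ℝ}

theorem of_contigSupportInt (h0 : ∀ n, 0 ≤ f n) (hloc : ∀ n, f (n - 1) * f (n + 1) ≤ f n ^ 2)
    (hsupp : ContigSupportInt f) : IsLogConcaveSeq f := by
  refine ⟨h0, fun a b hab => ?_⟩
  induction b, hab using Int.leInduction with
  | base => rw [mul_comm]
  | succ b hab ih =>
    rcases (h0 a).eq_or_lt with ha | ha
    · rw [← ha, zero_mul]
      exact mul_nonneg (h0 _) (h0 _)
    rcases (h0 (b + 1 + 1)).eq_or_lt with hb | hb
    · rw [← hb, mul_zero]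
      exact mul_nonneg (h0 _) (h0 _)
    have hfb : 0 < f b := hsupp a b (b + 1 + 1) hab (by lia) ha hb
    have hlocal : f b * f (b + 1 + 1) ≤ f (b + 1) ^ 2 := by
      simpa only [add_sub_cancel_right] using hloc (b + 1)
    refine le_of_mul_le_mul_right ?_ hfb
    calc f a * f (b + 1 + 1) * f b = f a * (f b * f (b + 1 + 1)) := by ring
      _ ≤ f a * f (b + 1) ^ 2 := mul_le_mul_of_nonneg_left hlocal ha.le
      _ = f a * f (b + 1) * f (b + 1) := by ring
      _ ≤ f (a + 1) * f b * f (b + 1) := mul_le_mul_of_nonneg_right ih (h0 _)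
      _ = f (a + 1) * f (b + 1) * f b := by ring

theorem mul_le_sq (hf : IsLogConcaveSeq f) (n : ℤ) : f (n - 1) * f (n + 1) ≤ f n ^ 2 := by
  simpa only [sub_add_cancel, sq] using hf.mul_add_one_le (n - 1) n (by lia)

theorem contigSupportInt (hf : IsLogConcaveSeq f) : ContigSupportInt f := by
  intro a b c hab hbc ha hc
  induction b, hab using Int.leInduction with
  | base => exact ha
  | succ b _ ih =>
    have hb := ih (by lia)
    have hcross := hf.mul_add_one_le b (c - 1) (by lia)
    rw [sub_add_cancel] at hcross
    exact pos_of_mul_pos_left ((mul_pos hb hc).trans_le hcross) (hf.nonneg _)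

theorem comp_neg (hf : IsLogConcaveSeq f) : IsLogConcaveSeq fun n => f (-n) := by
  refine ⟨fun n => hf.nonneg _, fun a b hab => ?_⟩
  have hcross := hf.mul_add_one_le (-(b + 1)) (-(a + 1)) (by lia)
  rw [show -(b + 1) + 1 = -b by ring, show -(a + 1) + 1 = -a by ring] at hcross
  linarith

theorem indicator (hf : IsLogConcaveSeq f) {I : Set ℤ} (hI : IsIntervalZ I) :
    IsLogConcaveSeq (I.indicator f) := by
  have h0 : ∀ n, 0 ≤ I.indicator f n := Set.indicator_nonneg fun n _ => hf.nonneg n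
  refine ⟨h0, fun a b hab => ?_⟩
  by_cases ha : a ∈ I
  · by_cases hb : b + 1 ∈ I
    · have ha' : a + 1 ∈ I := hI a _ (b + 1) (by lia) (by lia) ha hb
      have hb' : b ∈ I := hI a _ (b + 1) (by lia) (by lia) ha hb
      simpa only [Set.indicator_of_mem, ha, hb, ha', hb'] using hf.mul_add_one_le a b hab
    · rw [Set.indicator_of_notMem hb, mul_zero]
      exact mul_nonneg (h0 _) (h0 _)
  · rw [Set.indicator_of_notMem ha, zero_mul]
    exact mul_nonneg (h0 _) (h0 _)

theorem isClosed : IsClosed {f : ℤ → ℝ | IsLogConcaveSeq f} := by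
  have hrepr : {f : ℤ → ℝ | IsLogConcaveSeq f} = (⋂ n, {f | 0 ≤ f n}) ∩
      ⋂ a, ⋂ b, ⋂ (_ : a ≤ b), {f | f a * f (b + 1) ≤ f (a + 1) * f b} := by
    ext f
    simp only [Set.mem_inter_iff, Set.mem_iInter]
    exact ⟨fun hf => ⟨hf.nonneg, hf.mul_add_one_le⟩, fun hf => ⟨hf.1, hf.2⟩⟩
  rw [hrepr]
  exact (isClosed_iInter fun n => isClosed_le (by fun_prop) (by fun_prop)).inter
    (isClosed_iInter fun a => isClosed_iInter fun b => isClosed_iInter fun _ =>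
      isClosed_le (by fun_prop) (by fun_prop))

theorem antitone_sum_Icc (hf : IsLogConcaveSeq f) (l : ℤ) :
    Antitone fun n => ∑ j ∈ Icc n l, f j := fun _ _ hmn =>
  sum_le_sum_of_subset_of_nonneg (Icc_subset_Icc_left hmn) fun j _ _ => hf.nonneg j

theorem sum_Icc (hf : IsLogConcaveSeq f) (l : ℤ) :
    IsLogConcaveSeq fun n => ∑ j ∈ Icc n l, f j := by
  have h0 : ∀ n, 0 ≤ ∑ j ∈ Icc n l, f j := fun n => sum_nonneg fun j _ => hf.nonneg j
  refine of_contigSupportInt h0 (fun n => ?_) fun a b c _ hbc _ hc =>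
    hc.trans_le (hf.antitone_sum_Icc l hbc)
  rcases lt_or_ge l (n + 1) with hl | hl
  · rw [Icc_eq_empty (by lia : ¬n + 1 ≤ l), sum_empty, mul_zero]
    positivity
  have hpeel : ∀ m ≤ l, ∑ j ∈ Icc m l, f j = f m + ∑ j ∈ Icc (m + 1) l, f j := fun m hm => by
    rw [← insert_Icc_add_one_left_eq_Icc hm, sum_insert (by simp)]
  have hshift : ∑ j ∈ Icc (n + 1) l, f j = ∑ j ∈ Icc n (l - 1), f (j + 1) := by
    rw [← sum_image (g := fun j => j + 1) (by simp), image_add_right_Icc, sub_add_cancel]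
  have hcross : f (n - 1) * ∑ j ∈ Icc (n + 1) l, f j ≤ f n * ∑ j ∈ Icc n l, f j := by
    calc f (n - 1) * ∑ j ∈ Icc (n + 1) l, f j
        ≤ f n * ∑ j ∈ Icc n (l - 1), f j := by
          rw [hshift, mul_sum, mul_sum]
          refine sum_le_sum fun j hj => ?_
          simpa only [sub_add_cancel] using
            hf.mul_add_one_le (n - 1) j (by have := (mem_Icc.1 hj).1; lia)
      _ ≤ f n * ∑ j ∈ Icc n l, f j := mul_le_mul_of_nonneg_left
          (sum_le_sum_of_subset_of_nonneg (Icc_subset_Icc_right (by lia))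
            fun j _ _ => hf.nonneg j) (hf.nonneg n)
  have hprev := hpeel (n - 1) (by lia)
  rw [sub_add_cancel] at hprev
  rw [hprev]
  linear_combination hcross - (∑ j ∈ Icc n l, f j) * hpeel n (by lia)

theorem mul_log_sub_log_le (hf : IsLogConcaveSeq f) {k : ℤ} {m N : ℕ} (hmN : m ≤ N)
    (hpos : ∀ i ≤ N, 0 < f (k + i)) :
    (m : ℝ) * (Real.log (f (k + N)) - Real.log (f k)) ≤
      N * (Real.log (f (k + m)) - Real.log (f k)) := by
  set L : ℕ → ℝ := fun i => Real.log (f (k + i)) with hL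
  have hanti : AntitoneOn (fun i => L (i + 1) - L i) (Set.Iio N) := by
    refine antitoneOn_of_add_one_le Set.ordConnected_Iio fun i _ _ hi => ?_
    rw [Set.mem_Iio] at hi
    have h₀ := hpos i (by lia)
    have h₁ := hpos (i + 1) (by lia)
    have h₂ := hpos (i + 1 + 1) (by lia)
    have hcross : f (k + i) * f (k + ↑(i + 1 + 1)) ≤ f (k + ↑(i + 1)) * f (k + ↑(i + 1)) := by
      simpa only [Nat.cast_add, Nat.cast_one, add_assoc] using
        hf.mul_add_one_le (k + i) (k + i + 1) (by lia)
    have hlog := Real.log_le_log (mul_pos h₀ h₂) hcross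
    rw [Real.log_mul h₀.ne' h₂.ne', Real.log_mul h₁.ne' h₁.ne'] at hlog
    simp only [hL]
    linarith
  have hchord := mul_sum_range_le_mul_sum_range_of_antitoneOn hanti hmN
  rw [sum_range_sub, sum_range_sub] at hchord
  simpa [hL] using hchord

theorem rpow_mul_rpow_le (hf : IsLogConcaveSeq f) (hanti : Antitone f) {k z : ℤ} (hkz : k ≤ z)
    {m : ℕ} {δ : ℝ} (hδ0 : 0 < δ) (hδ1 : δ ≤ 1) (hm : (m : ℝ) ≤ δ * (z - k)) :
    f z ^ δ * f k ^ (1 - δ) ≤ f (k + m) := by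
  rcases (hf.nonneg z).eq_or_lt with hz | hz
  · rw [← hz, Real.zero_rpow hδ0.ne', zero_mul]
    exact hf.nonneg _
  obtain ⟨N, rfl⟩ := Int.le.dest hkz
  replace hm : (m : ℝ) ≤ δ * N := by
    push_cast at hm
    linarith
  have hmN : m ≤ N := by
    exact_mod_cast hm.trans (mul_le_of_le_one_left N.cast_nonneg hδ1)
  have hpos : ∀ i ≤ N, 0 < f (k + i) := fun i hi => hz.trans_le (hanti (by lia))
  have hk : 0 < f k := hz.trans_le (hanti hkz)
  have hlog : Real.log (f (k + N)) ≤ Real.log (f k) := Real.log_le_log hz (hanti hkz)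
  have hchord := hf.mul_log_sub_log_le hmN hpos
  rw [← Real.log_le_log_iff (by positivity) (hpos m hmN), Real.log_mul (by positivity)
    (by positivity), Real.log_rpow hz, Real.log_rpow hk]
  rcases N.eq_zero_or_pos with rfl | hN
  · obtain rfl : m = 0 := by lia
    simp only [Nat.cast_zero, add_zero]
    linarith
  · have hδm := mul_le_mul_of_nonneg_right hm (sub_nonneg.2 hlog)
    refine le_of_mul_le_mul_left ?_ (Nat.cast_pos (α := ℝ).2 hN)
    linarith

end IsLogConcaveSeq

theorem isIntervalZ_Icc (a b : ℤ) : IsIntervalZ (Icc a b : Finset ℤ) := by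
  rw [coe_Icc]
  exact fun x y z hxy hyz hx hz => Set.ordConnected_Icc.out hx hz ⟨hxy, hyz⟩

theorem exists_eq_Icc_of_isIntervalZ {t : Finset ℤ} (ht : IsIntervalZ t) :
    ∃ k l, t = Icc k l := by
  rcases t.eq_empty_or_nonempty with rfl | hne
  · exact ⟨1, 0, rfl⟩
  refine ⟨t.min' hne, t.max' hne, Subset.antisymm (fun n hn => ?_) fun n hn => ?_⟩
  · exact mem_Icc.2 ⟨t.min'_le n hn, t.le_max' n hn⟩
  · exact ht _ n _ (mem_Icc.1 hn).1 (mem_Icc.1 hn).2 (t.min'_mem hne) (t.max'_mem hne)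

section DilationInterior

open Pointwise

variable {K K' A : Set ℤ} {δ : ℝ}

theorem dilationInterior_subset : dilationInterior K A δ ⊆ A := fun _ hz => hz.1

theorem dilationInterior_inter_subset (hK : K' ⊆ K) :
    dilationInterior K A δ ∩ K' ⊆ dilationInterior K' (A ∩ K') δ := by
  rintro z ⟨⟨hzA, hz⟩, hzK'⟩
  refine ⟨⟨hzA, hzK'⟩, fun Δ hΔ hfin hΔK' hzΔ => ?_⟩
  rw [Set.inter_assoc, Set.inter_eq_self_of_subset_right (Set.sdiff_subset.trans hΔK')]
  exact hz Δ hΔ hfin (hΔK'.trans hK) hzΔ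

theorem neg_dilationInterior_subset :
    -dilationInterior K A δ ⊆ dilationInterior (-K) (-A) δ := by
  rintro z ⟨hzA, hz⟩
  refine ⟨hzA, fun Δ hΔ hfin hΔK hzΔ => ?_⟩
  have hneg : -Δ \ {-z} = -(Δ \ {z}) := by
    ext n
    simp [neg_eq_iff_eq_neg]
  have hdense := hz (-Δ) (fun a b c hab hbc ha hc => hΔ (-c) (-b) (-a) (by lia) (by lia) hc ha)
    hfin.neg (Set.neg_subset.2 hΔK) (Set.neg_mem_neg.2 hzΔ)
  have hinter : A ∩ -(Δ \ {z}) = -(-A ∩ (Δ \ {z})) := by rw [Set.inter_neg, neg_neg]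
  rwa [hneg, hinter, Set.ncard_neg, Set.ncard_neg] at hdense

end DilationInterior

section Counting

variable {A B : Finset ℤ} {K : Set ℤ} {δ : ℝ}

theorem card_erase_sdiff_le {Δ : Finset ℤ} {z : ℤ} (hz : z ∈ dilationInterior K A δ)
    (hΔ : IsIntervalZ Δ) (hΔK : ↑Δ ⊆ K) (hzΔ : z ∈ Δ) :
    (#(Δ.erase z \ A) : ℝ) ≤ δ * #(Δ.erase z) := by
  have hdense := hz.2 Δ hΔ Δ.finite_toSet hΔK hzΔ
  rw [← coe_erase, ← coe_inter, Set.ncard_coe_finset, Set.ncard_coe_finset, inter_comm] at hdense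
  have hcard : (#(Δ.erase z \ A) : ℝ) + #(Δ.erase z ∩ A) = #(Δ.erase z) := by
    exact_mod_cast card_sdiff_add_card_inter _ _
  linarith

theorem card_Ioc_sdiff_le {w y : ℤ} (hw : w ∈ dilationInterior K A δ) (hwy : w ≤ y)
    (hK : Set.Icc w y ⊆ K) : (#(Ioc w y \ A) : ℝ) ≤ δ * #(Ioc w y) := by
  rw [← Icc_erase_left]
  exact card_erase_sdiff_le hw (isIntervalZ_Icc w y) (by rwa [coe_Icc]) (left_mem_Icc.2 hwy)

theorem card_Ico_sdiff_le {w y : ℤ} (hw : w ∈ dilationInterior K A δ) (hyw : y ≤ w)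
    (hK : Set.Icc y w ⊆ K) : (#(Ico y w \ A) : ℝ) ≤ δ * #(Ico y w) := by
  rw [← Icc_erase_right]
  exact card_erase_sdiff_le hw (isIntervalZ_Icc y w) (by rwa [coe_Icc]) (right_mem_Icc.2 hyw)

theorem card_Icc_sdiff_le (hB : ↑B ⊆ dilationInterior K A δ) {z : ℤ} (hz : z ∈ B) (y : ℤ)
    (hK : Set.Icc z y ⊆ K) : (#(Icc z y \ A) : ℝ) ≤ δ * #(Icc z y \ B) := by
  rcases lt_or_ge y z with hyz | hzy
  · simp [Icc_eq_empty hyz.not_ge]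
  have hne : (B ∩ Icc z y).Nonempty := ⟨z, mem_inter.2 ⟨hz, left_mem_Icc.2 hzy⟩⟩
  obtain ⟨w, hw, hmax⟩ := exists_max_image (B ∩ Icc z y) id hne
  simp only [mem_inter, mem_Icc, id] at hw hmax
  obtain ⟨hwB, hzw, hwy⟩ := hw
  have hgap : Disjoint (Ioc w y) B := disjoint_left.2 fun n hn hnB => by
    rw [mem_Ioc] at hn
    exact hn.1.not_ge (hmax n ⟨hnB, by lia, hn.2⟩)
  have hsplit : ∀ C : Finset ℤ, w ∈ C →
      #(Icc z y \ C) = #(Icc z (w - 1) \ C) + #(Ioc w y \ C) := fun C hwC => by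
    rw [← card_union_of_disjoint (disjoint_left.2 (by grind))]
    congr 1
    grind
  -- Density at `w` covers the part after the last point of `B`; the rest is a shorter interval.
  have hright := card_Ioc_sdiff_le (hB hwB) hwy ((Set.Icc_subset_Icc_left hzw).trans hK)
  have hleft := card_Icc_sdiff_le hB hz (w - 1) ((Set.Icc_subset_Icc_right (by lia)).trans hK)
  rw [hsplit A (hB hwB).1, hsplit B hwB, sdiff_eq_self_of_disjoint hgap]
  push_cast
  linarith
termination_by (y + 1 - z).toNat

end Counting

section MonotoneCase

variable {p : ℤ → ℝ} {k l : ℤ} {A B : Finset ℤ} {δ : ℝ}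

theorem sum_Icc_sdiff_le (hanti : AntitoneOn p (Set.Icc k l)) (hp0 : ∀ n, 0 ≤ p n)
    (hB : ↑B ⊆ dilationInterior (Set.Icc k l) A δ) {z : ℤ} (hz : z ∈ B) (hkz : k ≤ z) :
    ∑ n ∈ Icc z l \ A, p n ≤ δ * ∑ n ∈ Icc z l \ B, p n := by
  refine sum_le_mul_sum_of_card_le sdiff_subset sdiff_subset (fun y hy => ?_)
    (hanti.mono (Set.Icc_subset_Icc_left hkz)) fun n _ => hp0 n
  have hprefix : ∀ C : Finset ℤ, (Icc z l \ C) ∩ Icc z y = Icc z y \ C := fun C => by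
    rw [sdiff_inter_right_comm, inter_eq_right.2 (Icc_subset_Icc_right (mem_Icc.1 hy).2)]
  rw [hprefix, hprefix]
  exact card_Icc_sdiff_le hB hz y (Set.Icc_subset_Icc hkz (mem_Icc.1 hy).2)

theorem sum_Ico_sdiff_le (hp : IsLogConcaveSeq p) (hanti : AntitoneOn p (Set.Icc k l)) {z : ℤ}
    (hz : z ∈ dilationInterior (Set.Icc k l) A δ) (hkz : k ≤ z) (hzl : z ≤ l) (hδ0 : 0 < δ)
    (hδ1 : δ ≤ 1) :
    ∑ n ∈ Ico k z \ A, p n ≤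
      ∑ n ∈ Icc k l, p n - (∑ n ∈ Icc z l, p n) ^ δ * (∑ n ∈ Icc k l, p n) ^ (1 - δ) := by
  set m := #(Ico k z \ A)
  have hmz : (m : ℝ) ≤ δ * (z - k) := by
    have hcard : ((#(Ico k z) : ℤ) : ℝ) = (z - k : ℤ) := by rw [Int.card_Ico_of_le _ _ hkz]
    push_cast at hcard
    rw [← hcard]
    exact card_Ico_sdiff_le hz hkz (Set.Icc_subset_Icc_right hzl)
  have hml : k + m ≤ l := by
    have hcard := card_le_card (sdiff_subset : Ico k z \ A ⊆ Ico k z)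
    rw [Int.card_Ico] at hcard
    lia
  have hrearrange : ∑ n ∈ Ico k z \ A, p n ≤ ∑ n ∈ Ico k (k + m), p n :=
    sum_le_sum_Ico_card (sdiff_subset.trans fun n hn => by grind) hanti
      fun n _ => hp.nonneg n
  have hsplit : ∑ n ∈ Ico k (k + m), p n + ∑ n ∈ Icc (k + m) l, p n = ∑ n ∈ Icc k l, p n := by
    rw [← sum_union (disjoint_left.2 (by grind))]
    congr 1
    grind
  have htail : (∑ n ∈ Icc z l, p n) ^ δ * (∑ n ∈ Icc k l, p n) ^ (1 - δ) ≤
      ∑ n ∈ Icc (k + m) l, p n :=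
    (hp.sum_Icc l).rpow_mul_rpow_le (hp.antitone_sum_Icc l) hkz hδ0 hδ1 hmz
  linarith

theorem dilation_inequality_of_antitoneOn (hp : IsLogConcaveSeq p)
    (hanti : AntitoneOn p (Set.Icc k l)) (hA : A ⊆ Icc k l)
    (hB : ↑B ⊆ dilationInterior (Set.Icc k l) A δ) (hδ0 : 0 < δ) (hδ1 : δ ≤ 1) :
    (∑ n ∈ B, p n) ^ δ * (∑ n ∈ Icc k l, p n) ^ (1 - δ) ≤ ∑ n ∈ A, p n := by
  have hBA : B ⊆ A := coe_subset.1 (hB.trans dilationInterior_subset)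
  rcases B.eq_empty_or_nonempty with rfl | hne
  · rw [sum_empty, Real.zero_rpow hδ0.ne', zero_mul]
    exact sum_nonneg fun n _ => hp.nonneg n
  set z := B.min' hne
  have hz : z ∈ B := B.min'_mem hne
  obtain ⟨hkz, hzl⟩ := mem_Icc.1 (hA (hBA hz))
  have hBz : B ⊆ Icc z l := fun n hn =>
    mem_Icc.2 ⟨B.min'_le n hn, (mem_Icc.1 (hA (hBA hn))).2⟩
  have hleft := sum_Ico_sdiff_le hp hanti (hB hz) hkz hzl hδ0 hδ1
  have hright := sum_Icc_sdiff_le hanti hp.nonneg hB hz hkz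
  have hsplit : ∑ n ∈ Icc k l, p n =
      ∑ n ∈ A, p n + (∑ n ∈ Ico k z \ A, p n + ∑ n ∈ Icc z l \ A, p n) := by
    rw [← sum_union (disjoint_left.2 (by grind)), ← union_sdiff_distrib,
      show Ico k z ∪ Icc z l = Icc k l by grind, add_comm, sum_sdiff hA]
  have hscalar := rpow_mul_rpow_le_sub (sum_nonneg fun n _ => hp.nonneg n)
    (sum_le_sum_of_subset_of_nonneg hBz fun n _ _ => hp.nonneg n)
    (hp.antitone_sum_Icc l hkz) hδ0.le hδ1
  rw [sum_sdiff_eq_sub hBz] at hright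
  linarith

open Pointwise in
theorem dilation_inequality_of_monotoneOn (hp : IsLogConcaveSeq p)
    (hmono : MonotoneOn p (Set.Icc k l)) (hA : A ⊆ Icc k l)
    (hB : ↑B ⊆ dilationInterior (Set.Icc k l) A δ) (hδ0 : 0 < δ) (hδ1 : δ ≤ 1) :
    (∑ n ∈ B, p n) ^ δ * (∑ n ∈ Icc k l, p n) ^ (1 - δ) ≤ ∑ n ∈ A, p n := by
  have hanti : AntitoneOn (fun n => p (-n)) (Set.Icc (-l) (-k)) := fun a ha b hb hab =>
    hmono (by grind) (by grind) (by lia)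
  have hnegA : -A ⊆ Icc (-l) (-k) := fun n hn => by
    have hneg_mem := mem_Icc.1 (hA (mem_neg'.1 hn))
    exact mem_Icc.2 (by lia)
  have hnegB : ↑(-B) ⊆ dilationInterior (Set.Icc (-l) (-k)) ↑(-A) δ := by
    rw [coe_neg, coe_neg, ← Set.neg_Icc]
    exact (Set.neg_subset_neg.2 hB).trans neg_dilationInterior_subset
  have hneg : ∑ n ∈ Icc (-l) (-k), p (-n) = ∑ n ∈ Icc k l, p n :=
    sum_nbij' Neg.neg Neg.neg (by grind) (by grind) (by simp) (by simp) (by simp)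
  have hreflect := dilation_inequality_of_antitoneOn hp.comp_neg hanti hnegA hnegB hδ0 hδ1
  simpa only [hneg, sum_neg_index, neg_neg] using hreflect

theorem dilation_inequality_of_sq_eq {q : ℤ → ℝ} {s A B : Finset ℤ} {δ : ℝ}
    (hq : IsLogConcaveSeq q)
    (hgeom : ∀ c, 0 < q (c - 1) → 0 < q (c + 1) → q c ^ 2 = q (c - 1) * q (c + 1))
    (hs : IsIntervalZ s) (hA : A ⊆ s) (hB : ↑B ⊆ dilationInterior s A δ)
    (hδ0 : 0 < δ) (hδ1 : δ ≤ 1) :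
    (∑ n ∈ B, q n) ^ δ * (∑ n ∈ s, q n) ^ (1 - δ) ≤ ∑ n ∈ A, q n := by
  have hBs : B ⊆ s := (coe_subset.1 (hB.trans dilationInterior_subset)).trans hA
  obtain ⟨k, l, hkl⟩ : ∃ k l, {n ∈ s | 0 < q n} = Icc k l := by
    refine exists_eq_Icc_of_isIntervalZ fun a b c hab hbc ha hc => ?_
    simp only [coe_filter, Set.mem_ofPred_eq] at ha hc ⊢
    exact ⟨hs a b c hab hbc ha.1 hc.1, hq.contigSupportInt a b c hab hbc ha.2 hc.2⟩
  have hmem : ∀ n ∈ Icc k l, n ∈ s ∧ 0 < q n := fun n hn => by rwa [← hkl, mem_filter] at hn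
  have hrestrict : ∀ C ⊆ s, ∑ n ∈ C ∩ Icc k l, q n = ∑ n ∈ C, q n := fun C hC => by
    refine sum_subset inter_subset_left fun n hnC hn => ?_
    by_contra hne
    refine hn (mem_inter.2 ⟨hnC, ?_⟩)
    rw [← hkl, mem_filter]
    exact ⟨hC hnC, (hq.nonneg n).lt_of_ne' hne⟩
  have hsub : Icc k l ⊆ s := fun n hn => (hmem n hn).1
  have hB' : ↑(B ∩ Icc k l) ⊆ dilationInterior (Set.Icc k l) ↑(A ∩ Icc k l) δ := by
    rw [coe_inter, coe_inter, ← coe_Icc]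
    exact (Set.inter_subset_inter_left _ hB).trans
      (dilationInterior_inter_subset (coe_subset.2 hsub))
  rw [← hrestrict A hA, ← hrestrict B hBs, ← hrestrict s Subset.rfl, inter_eq_right.2 hsub]
  rcases monotoneOn_or_antitoneOn_of_sq_eq (fun n hn => (hmem n hn).2) fun c hc =>
    hgeom c (hmem _ (by grind)).2 (hmem _ (by grind)).2 with hmono | hanti
  · exact dilation_inequality_of_monotoneOn hq hmono inter_subset_right hB' hδ0 hδ1
  · exact dilation_inequality_of_antitoneOn hq hanti inter_subset_right hB' hδ0 hδ1

end MonotoneCase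

section Localization

open Filter Topology

theorem exists_kinked_affine (φ : (ℤ → ℝ) →ₗ[ℝ] ℝ × ℝ) (c : ℤ) :
    ∃ w : ℤ → ℝ, φ w = 0 ∧ (∀ n ≠ c, w (n - 1) + w (n + 1) = 2 * w n) ∧
      ¬(w (c - 1) = 0 ∧ w c = 0 ∧ w (c + 1) = 0) := by
  set kinked : (Fin 3 → ℝ) →ₗ[ℝ] ℤ → ℝ :=
    Fintype.linearCombination ℝ ![fun _ => 1, fun n => (n : ℝ) - c, fun n => |(n : ℝ) - c|]
  have hkinked : ∀ x n, kinked x n = x 0 + x 1 * (n - c) + x 2 * |(n : ℝ) - c| := fun x n => by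
    simp [kinked, Fintype.linearCombination_apply, Fin.sum_univ_three]
  have hker : LinearMap.ker (φ ∘ₗ kinked) ≠ ⊥ := LinearMap.ker_ne_bot_of_finrank_lt (by simp)
  obtain ⟨x, hφx, hx⟩ := Submodule.exists_mem_ne_zero_of_ne_bot hker
  refine ⟨kinked x, hφx, fun n hn => ?_, fun ⟨hpred, hc, hsucc⟩ => hx ?_⟩
  · rw [hkinked, hkinked, hkinked]
    push_cast
    rcases lt_or_gt_of_ne hn with hlt | hgt
    · have hlt' : (n : ℝ) + 1 ≤ c := by exact_mod_cast hlt
      rw [abs_of_nonpos (by linarith), abs_of_nonpos (by linarith), abs_of_nonpos (by linarith)]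
      ring
    · have hgt' : (c : ℝ) + 1 ≤ n := by exact_mod_cast hgt
      rw [abs_of_nonneg (by linarith), abs_of_nonneg (by linarith), abs_of_nonneg (by linarith)]
      ring
  · rw [hkinked] at hpred hc hsucc
    norm_num at hpred hc hsucc
    ext i
    fin_cases i <;> simp <;> linarith

variable {p q w : ℤ → ℝ} {s A B : Finset ℤ} {c : ℤ}

theorem IsLogConcaveSeq.mul_of_concave_off {u : ℤ → ℝ} (hq : IsLogConcaveSeq q)
    (hpos : ∀ n, 0 < q n → 0 < u n) (hu : ∀ n ≠ c, u (n - 1) + u (n + 1) ≤ 2 * u n)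
    (hc : q (c - 1) * u (c - 1) * (q (c + 1) * u (c + 1)) ≤ (q c * u c) ^ 2) :
    IsLogConcaveSeq fun n => q n * u n := by
  have hiff : ∀ n, 0 < q n * u n ↔ 0 < q n := fun n =>
    ⟨fun h => (hq.nonneg n).lt_of_ne' (left_ne_zero_of_mul h.ne'), fun h => mul_pos h (hpos n h)⟩
  refine .of_contigSupportInt (fun n => ?_) (fun n => ?_) fun a b d hab hbd ha hd => ?_
  · rcases (hq.nonneg n).eq_or_lt with hn | hn
    · rw [← hn, zero_mul]
    · exact ((hiff n).2 hn).le
  · rcases eq_or_ne n c with rfl | hn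
    · exact hc
    rcases (hq.nonneg (n - 1)).eq_or_lt with h₁ | h₁
    · rw [← h₁, zero_mul, zero_mul]
      positivity
    rcases (hq.nonneg (n + 1)).eq_or_lt with h₂ | h₂
    · rw [← h₂, zero_mul, mul_zero]
      positivity
    have hamgm : u (n - 1) * u (n + 1) ≤ u n ^ 2 := by
      have hu₁ := hpos _ h₁
      have hu₂ := hpos _ h₂
      nlinarith [hu n hn, sq_nonneg (u (n - 1) - u (n + 1))]
    calc q (n - 1) * u (n - 1) * (q (n + 1) * u (n + 1))
        = q (n - 1) * q (n + 1) * (u (n - 1) * u (n + 1)) := by ring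
      _ ≤ q n ^ 2 * u n ^ 2 := mul_le_mul (hq.mul_le_sq n) hamgm
          (mul_pos (hpos _ h₁) (hpos _ h₂)).le (sq_nonneg _)
      _ = (q n * u n) ^ 2 := by ring
  · rw [hiff] at ha hd ⊢
    exact hq.contigSupportInt a b d hab hbd ha hd

theorem IsLogConcaveSeq.eventually_mul_one_add (hq : IsLogConcaveSeq q)
    (hs : ∀ n ∉ s, q n = 0) (hc : q (c - 1) * q (c + 1) < q c ^ 2)
    (hw : ∀ n ≠ c, w (n - 1) + w (n + 1) = 2 * w n) :
    ∀ᶠ t in 𝓝 (0 : ℝ), IsLogConcaveSeq fun n => q n * (1 + t * w n) := by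
  have hpos : ∀ᶠ t in 𝓝 (0 : ℝ), ∀ n ∈ s, 0 < 1 + t * w n := by
    rw [eventually_all_finset]
    intro n _
    have hcont : ContinuousAt (fun t : ℝ => 1 + t * w n) 0 := by fun_prop
    exact hcont.eventually_const_lt (by simp)
  have hstrict : ∀ᶠ t in 𝓝 (0 : ℝ),
      q (c - 1) * (1 + t * w (c - 1)) * (q (c + 1) * (1 + t * w (c + 1))) <
        (q c * (1 + t * w c)) ^ 2 :=
    ContinuousAt.eventually_lt (by fun_prop) (by fun_prop) (by simpa using hc)
  filter_upwards [hpos, hstrict] with t htpos htc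
  refine hq.mul_of_concave_off (fun n hn => htpos n ?_) (fun n hn => ?_) htc.le
  · by_contra hns
    exact hn.ne' (hs n hns)
  · linear_combination t * hw n hn

/-- The log-concave sequences supported on `s` with the same mass on `s` and on `B` as `p`: the
compact set on which a linear functional is minimised in the localization argument. -/
def localizationSet (p : ℤ → ℝ) (s B : Finset ℤ) : Set (ℤ → ℝ) :=
  {q | IsLogConcaveSeq q ∧ (∀ n ∉ s, q n = 0) ∧
    ∑ n ∈ s, q n = ∑ n ∈ s, p n ∧ ∑ n ∈ B, q n = ∑ n ∈ B, p n}

theorem isCompact_localizationSet : IsCompact (localizationSet p s B) := by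
  have hbox : IsCompact (Set.univ.pi fun _ : ℤ => Set.Icc 0 (∑ n ∈ s, p n)) :=
    isCompact_univ_pi fun _ => isCompact_Icc
  refine hbox.of_isClosed_subset ?_ fun q ⟨hq, hqs, hsum, _⟩ n _ => ⟨hq.nonneg n, ?_⟩
  · have hsupp : IsClosed {q : ℤ → ℝ | ∀ n ∉ s, q n = 0} := by
      simp only [Set.ofPred_forall]
      exact isClosed_iInter fun n => isClosed_iInter fun _ =>
        isClosed_eq (by fun_prop) continuous_const
    exact IsLogConcaveSeq.isClosed.inter (hsupp.inter
      ((isClosed_eq (by fun_prop) continuous_const).inter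
        (isClosed_eq (by fun_prop) continuous_const)))
  · rw [← hsum]
    by_cases hn : n ∈ s
    · exact single_le_sum (fun i _ => hq.nonneg i) hn
    · rw [hqs n hn]
      exact sum_nonneg fun i _ => hq.nonneg i

theorem sq_eq_of_mem_extremePoints (hq : q ∈ (localizationSet p s B).extremePoints ℝ)
    (hpred : 0 < q (c - 1)) (hsucc : 0 < q (c + 1)) : q c ^ 2 = q (c - 1) * q (c + 1) := by
  obtain ⟨⟨hlc, hqs, hsum_s, hsum_B⟩, hextreme⟩ := hq
  refine (hlc.mul_le_sq c).antisymm' (not_lt.1 fun hlt => ?_)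
  have hcpos : 0 < q c := (hlc.nonneg c).lt_of_ne fun h => by
    rw [← h, zero_pow two_ne_zero] at hlt
    exact hlt.not_gt (mul_pos hpred hsucc)
  let mass (C : Finset ℤ) : (ℤ → ℝ) →ₗ[ℝ] ℝ := ∑ n ∈ C, q n • LinearMap.proj n
  have hmass : ∀ C v, mass C v = ∑ n ∈ C, q n * v n := fun C v => by simp [mass]
  obtain ⟨w, hφ, hw, hwne⟩ := exists_kinked_affine ((mass s).prod (mass B)) c
  rw [LinearMap.prod_apply, Function.prod_apply, Prod.mk_eq_zero, hmass, hmass] at hφ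
  have hmass_perturb : ∀ C t, ∑ n ∈ C, q n * w n = 0 →
      ∑ n ∈ C, q n * (1 + t * w n) = ∑ n ∈ C, q n := fun C t hC => by
    simp only [mul_add, mul_one, mul_left_comm _ t, sum_add_distrib, ← mul_sum, hC, mul_zero,
      add_zero]
  have hperturb : ∀ᶠ t in 𝓝 (0 : ℝ), (fun n => q n * (1 + t * w n)) ∈ localizationSet p s B := by
    filter_upwards [hlc.eventually_mul_one_add hqs hlt hw] with t ht
    exact ⟨ht, fun n hn => by simp only [hqs n hn, zero_mul], (hmass_perturb s t hφ.1).trans hsum_s,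
      (hmass_perturb B t hφ.2).trans hsum_B⟩
  have hperturb_neg := (continuous_neg.tendsto' (0 : ℝ) 0 neg_zero).eventually hperturb
  obtain ⟨t, ⟨ht, ht'⟩, ht0⟩ := ((hperturb.and hperturb_neg).filter_mono nhdsWithin_le_nhds |>.and
    (self_mem_nhdsWithin (s := {0}ᶜ))).exists
  have hmid : q ∈ openSegment ℝ (fun n => q n * (1 + t * w n)) (fun n => q n * (1 + -t * w n)) := by
    refine ⟨1 / 2, 1 / 2, by norm_num, by norm_num, by norm_num, funext fun n => ?_⟩
    simp only [Pi.add_apply, Pi.smul_apply, smul_eq_mul]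
    ring
  have hzero : ∀ n, 0 < q n → w n = 0 := fun n hn => by
    have heq := congrFun (hextreme ht ht' hmid) n
    have hprod : q n * (t * w n) = 0 := by linear_combination heq
    simpa [hn.ne', show t ≠ 0 from ht0] using hprod
  exact hwne ⟨hzero _ hpred, hzero _ hcpos, hzero _ hsucc⟩

theorem dilation_inequality_finset {δ : ℝ} (hp : IsLogConcaveSeq p) (hs : IsIntervalZ s)
    (hA : A ⊆ s) (hB : ↑B ⊆ dilationInterior s A δ) (hδ0 : 0 < δ) (hδ1 : δ ≤ 1) :
    (∑ n ∈ B, p n) ^ δ * (∑ n ∈ s, p n) ^ (1 - δ) ≤ ∑ n ∈ A, p n := by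
  have hBs : B ⊆ s := (coe_subset.1 (hB.trans dilationInterior_subset)).trans hA
  have hrestrict : ∀ C ⊆ s, ∑ n ∈ C, (↑s : Set ℤ).indicator p n = ∑ n ∈ C, p n := fun C hC =>
    sum_congr rfl fun n hn => Set.indicator_of_mem (hC hn) p
  have hmem : (↑s : Set ℤ).indicator p ∈ localizationSet p s B :=
    ⟨hp.indicator hs, fun n hn => Set.indicator_of_notMem hn p,
      hrestrict s Subset.rfl, hrestrict B hBs⟩
  let mass : (ℤ → ℝ) →L[ℝ] ℝ := ∑ n ∈ A, ContinuousLinearMap.proj n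
  have hmass : ∀ f, mass f = ∑ n ∈ A, f n := fun f => by simp [mass]
  obtain ⟨q, hq, hmin⟩ :=
    exists_mem_extremePoints_forall_le isCompact_localizationSet ⟨_, hmem⟩ mass
  obtain ⟨hlc, -, hsum_s, hsum_B⟩ := hq.1
  have hqA : ∑ n ∈ A, q n ≤ ∑ n ∈ A, p n := by
    rw [← hrestrict A hA, ← hmass, ← hmass]
    exact hmin _ hmem
  rw [← hsum_s, ← hsum_B]
  exact (dilation_inequality_of_sq_eq hlc (fun _ => sq_eq_of_mem_extremePoints hq) hs hA hB hδ0
    hδ1).trans hqA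

end Localization

open Filter Topology Classical in
theorem tendsto_sum_filter_measOf {p : ℤ → ℝ} (hsum : Summable p) (S : Set ℤ) :
    Tendsto (fun N : ℕ => ∑ n ∈ Icc (-N : ℤ) N with n ∈ S, p n) atTop (𝓝 (measOf p S)) := by
  refine ((hsum.indicator S).hasSum.comp tendsto_Icc_neg).congr fun N => ?_
  exact sum_indicator_eq_sum_filter _ (fun _ => p) (fun _ => S) id

open Classical in
theorem dilation_inequality_general {p : ℤ → ℝ} (hp : IsLogConcaveSeq p) (hsum : Summable p)
    {K A : Set ℤ} (hK : IsIntervalZ K) (hA : A ⊆ K) {δ : ℝ} (hδ0 : 0 < δ) (hδ1 : δ ≤ 1) :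
    measOf p (dilationInterior K A δ) ^ δ * measOf p K ^ (1 - δ) ≤ measOf p A := by
  have hlim := tendsto_sum_filter_measOf hsum
  refine le_of_tendsto_of_tendsto' (((hlim _).rpow_const (.inr hδ0.le)).mul
    ((hlim K).rpow_const (.inr (sub_nonneg.2 hδ1)))) (hlim A) fun N => ?_
  refine dilation_inequality_finset hp (fun a b c hab hbc ha hc => ?_)
    (monotone_filter_right _ fun _ _ h => hA h) (fun z hz => ?_) hδ0 hδ1
  · simp only [mem_coe, mem_filter, mem_Icc] at ha hc ⊢
    exact ⟨by lia, hK a b c hab hbc ha.2 hc.2⟩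
  · have hwindow : ∀ S : Set ℤ, (↑{n ∈ Icc (-N : ℤ) N | n ∈ S} : Set ℤ) = S ∩ Set.Icc (-N : ℤ) N :=
      fun S => Set.ext fun n => by
        simp only [mem_coe, mem_filter, mem_Icc, Set.mem_inter_iff, Set.mem_Icc, and_comm]
    rw [hwindow] at hz ⊢
    rw [hwindow, ← Set.inter_eq_self_of_subset_left hA, Set.inter_assoc]
    exact dilationInterior_inter_subset Set.inter_subset_left
      ⟨hz.1, hA (dilationInterior_subset hz.1), hz.2⟩

end DilationInequality

/-- Dilation inequality: if `μ` is log-concave (with p.m.f. `p`) and `A ⊆ K` with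
`K ⊆ ℤ` an interval, then `μ(A) ≥ μ(A_δ)^δ · μ(K)^{1−δ}` for every `δ ∈ (0,1)`. -/
theorem dilation_inequality (p : ℤ → ℝ) (hp : IsLogConcavePMF p)
    (K A : Set ℤ) (hK : IsIntervalZ K) (hA : A ⊆ K)
    (δ : ℝ) (hδ0 : 0 < δ) (hδ1 : δ < 1) :
    measOf p (dilationInterior K A δ) ^ δ * measOf p K ^ (1 - δ) ≤ measOf p A :=
  dilation_inequality_general (.of_contigSupportInt hp.1 hp.2.2.2.1 hp.2.2.2.2) hp.2.1 hK hA hδ0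
    hδ1.le
end
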